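/- arXiv:1603.06043 — 6 statements merged into one kernel-verified Lean document; each statement's English description precedes it below -/
import Mathlib

section
/- Let d ∈ ℕ with d ≥ 1 and set P = {kd : k ∈ ℕ₀}. Suppose s : P → ℝ is a partial positive definite sequence with pattern P, i.e., for every nonempty finite subset R ⊆ ℕ₀ such that r + r' ∈ P for all r, r' ∈ R, the matrix (s_{r+r'})_{r,r'∈R} is positive definite. Then s has a positive definite completion: there exists a real sequence (ŝ_k)_{k∈ℕ₀} with ŝ_p = s_p for all p ∈ P such that the Hankel matrix Ĥ_n = (ŝ_{i+j})_{i,j=0}^n is positive definite for every n ∈ ℕ₀. -/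
open MeasureTheory

/-!
Write `L` for the functional `X ^ k ↦ s (k * d)` on `ℝ[X]`. Prescribing `s` on the multiples of `d`
amounts to prescribing a functional on the polynomials `p(X ^ d)`, namely `p(X ^ d) ↦ L p`. If
`p(X ^ d) ≥ 0` on `ℝ`, then `p` is nonnegative on `ℝ` (`d` odd) or on `[0, ∞)` (`d` even), hence of
the form `σ` or `σ + X * τ` with sums of squares `σ` and `τ`, and `L p ≥ 0` because the Hankel
matrices of `s (k * d)` and, for even `d`, of `s ((k + 1) * d)` occur among the specified principal
submatrices. M. Riesz' theorem extends the functional to a `g` that is nonnegative on nonnegative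
polynomials. It is strictly positive on squares: every `p ≠ 0` divides some `q(X ^ d)` with `q ≠ 0`,
so `g (p ^ 2) = 0` would force `L (q ^ 2) = 0` by the Cauchy–Schwarz inequality.
-/

open Polynomial

namespace PatternMultiples

section PositiveDefinite

theorem posDef_of_forall_finset_submatrix {n R : Type*} [Ring R] [PartialOrder R] [StarRing R]
    {M : Matrix n n R}
    (h : ∀ S : Finset n, S.Nonempty →
      (M.submatrix (Subtype.val : S → n) (Subtype.val : S → n)).PosDef) :
    M.PosDef := by
  classical
  refine ⟨Matrix.IsHermitian.ext fun i j => ?_, fun x hx => ?_⟩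
  · exact (h {i, j} (Finset.insert_nonempty i {j})).isHermitian.apply ⟨i, by simp⟩ ⟨j, by simp⟩
  · have hmem : ∀ i ∈ x.support, i ∈ x.support := fun _ hi => hi
    have hpos := (h x.support (Finsupp.support_nonempty_iff.2 hx)).2
      (x := x.subtypeDomain (· ∈ x.support))
      (mt (Finsupp.subtypeDomain_eq_zero_iff hmem).1 hx)
    have hinner : ∀ (i : n) (a : R),
        ((x.subtypeDomain (· ∈ x.support)).sum fun j b => star a * M i j * b) =
          x.sum fun j b => star a * M i j * b :=
      fun i a => Finsupp.sum_subtypeDomain_index (h := fun j b => star a * M i j * b) hmem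
    simp only [Matrix.submatrix_apply, hinner] at hpos
    rwa [Finsupp.sum_subtypeDomain_index (h := fun i a => x.sum fun j b => star a * M i j * b)
      hmem] at hpos

/-- Partial positive definiteness of a sequence `s` with pattern `P`; only the values of `s` on `P`
matter. -/
def IsPartialPosDef (P : Set ℕ) (s : ℕ → ℝ) : Prop :=
  ∀ R : Finset ℕ, R.Nonempty → (∀ r ∈ R, ∀ r' ∈ R, r + r' ∈ P) →
    Matrix.PosDef (Matrix.of fun (r r' : R) => s (r.1 + r'.1))

theorem IsPartialPosDef.posDef_of_injective {P : Set ℕ} {s : ℕ → ℝ} (hs : IsPartialPosDef P s)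
    {ι : Type*} {f : ι → ℕ} (hf : Function.Injective f) (hP : ∀ i j, f i + f j ∈ P) :
    (Matrix.of fun i j => s (f i + f j)).PosDef := by
  refine posDef_of_forall_finset_submatrix fun S hS => ?_
  have hR : (Matrix.of fun r r' : S.map ⟨f, hf⟩ => s (r.1 + r'.1)).PosDef := by
    refine hs _ hS.map ?_
    simp only [Finset.mem_map, Function.Embedding.coeFn_mk]
    rintro _ ⟨i, -, rfl⟩ _ ⟨j, -, rfl⟩
    exact hP i j
  exact hR.submatrix (e := fun i : S => ⟨f i, Finset.mem_map_of_mem ⟨f, hf⟩ i.2⟩)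
    fun i j hij => Subtype.ext (hf (congrArg Subtype.val hij))

/-- The infinite Hankel matrix of `s`. It is positive definite iff all its truncations are, as
`Matrix.PosDef` tests finitely supported vectors only. -/
def hankelMatrix (s : ℕ → ℝ) : Matrix ℕ ℕ ℝ :=
  Matrix.of fun i j => s (i + j)

theorem IsPartialPosDef.posDef_hankelMatrix {P : Set ℕ} {s : ℕ → ℝ} (hs : IsPartialPosDef P s)
    {a d : ℕ} (hd : d ≠ 0) (hP : ∀ k, 2 * a + k * d ∈ P) :
    (hankelMatrix fun k => s (2 * a + k * d)).PosDef := by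
  have hinj : Function.Injective fun i => a + i * d :=
    (add_right_injective a).comp (mul_left_injective₀ hd)
  have hidx : ∀ i j, a + i * d + (a + j * d) = 2 * a + (i + j) * d := fun i j => by ring
  simpa only [hankelMatrix, hidx] using
    hs.posDef_of_injective hinj fun i j => (hidx i j).symm ▸ hP (i + j)

end PositiveDefinite

section RieszFunctional

/-- The Riesz functional of `s`, i.e. the linear functional on `ℝ[X]` with moments `s`. -/
noncomputable def rieszFunctional (s : ℕ → ℝ) : ℝ[X] →ₗ[ℝ] ℝ :=
  (basisMonomials ℝ).constr ℝ s

theorem rieszFunctional_monomial (s : ℕ → ℝ) (k : ℕ) (c : ℝ) :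
    rieszFunctional s (monomial k c) = c * s k := by
  have h : rieszFunctional s (monomial k 1) = s k := by
    have h := (basisMonomials ℝ).constr_basis ℝ s k
    rwa [coe_basisMonomials] at h
  rw [← mul_one c, ← smul_eq_mul, ← smul_monomial, map_smul, h, smul_eq_mul, smul_eq_mul, mul_one]

theorem rieszFunctional_moments (g : ℝ[X] →ₗ[ℝ] ℝ) :
    rieszFunctional (fun k => g (X ^ k)) = g := by
  refine lhom_ext' fun k => LinearMap.ext_ring ?_
  rw [LinearMap.comp_apply, LinearMap.comp_apply, rieszFunctional_monomial, one_mul,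
    monomial_one_right_eq_X_pow]

theorem rieszFunctional_shift (s : ℕ → ℝ) (p : ℝ[X]) :
    rieszFunctional (fun k => s (k + 1)) p = rieszFunctional s (X * p) := by
  induction p using Polynomial.induction_on' with
  | add p q hp hq => simp only [mul_add, map_add, hp, hq]
  | monomial k c => rw [X_mul_monomial, rieszFunctional_monomial, rieszFunctional_monomial]

theorem rieszFunctional_sq (s : ℕ → ℝ) (p : ℝ[X]) :
    rieszFunctional s (p ^ 2) =
      ((basisMonomials ℝ).repr p).sum fun i a =>
        ((basisMonomials ℝ).repr p).sum fun j b => star a * hankelMatrix s i j * b := by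
  have hp : p = ((basisMonomials ℝ).repr p).sum fun i a => monomial i a := by
    conv_lhs => rw [← (basisMonomials ℝ).linearCombination_repr p]
    simp [Finsupp.linearCombination_apply, smul_monomial]
  conv_lhs => rw [hp, sq]
  simp only [Finsupp.sum, Finset.sum_mul_sum, monomial_mul_monomial, map_sum,
    rieszFunctional_monomial]
  exact Finset.sum_congr rfl fun i _ => Finset.sum_congr rfl fun j _ => mul_right_comm _ _ _

theorem hankelMatrix_isHermitian (s : ℕ → ℝ) : (hankelMatrix s).IsHermitian :=
  Matrix.IsHermitian.ext fun i j => congrArg s (add_comm j i)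

theorem posDef_hankelMatrix_iff {s : ℕ → ℝ} :
    (hankelMatrix s).PosDef ↔ ∀ p ≠ 0, 0 < rieszFunctional s (p ^ 2) := by
  simp only [Matrix.PosDef, hankelMatrix_isHermitian, true_and, rieszFunctional_sq]
  refine ⟨fun h p hp => h ((LinearEquiv.map_ne_zero_iff _).2 hp), fun h x hx => ?_⟩
  simpa only [LinearEquiv.apply_symm_apply] using
    h ((basisMonomials ℝ).repr.symm x) ((LinearEquiv.map_ne_zero_iff _).2 hx)

theorem posSemidef_hankelMatrix_iff {s : ℕ → ℝ} :
    (hankelMatrix s).PosSemidef ↔ ∀ p, 0 ≤ rieszFunctional s (p ^ 2) := by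
  simp only [Matrix.PosSemidef, hankelMatrix_isHermitian, true_and, rieszFunctional_sq]
  refine ⟨fun h p => h _, fun h x => ?_⟩
  simpa only [LinearEquiv.apply_symm_apply] using h ((basisMonomials ℝ).repr.symm x)

end RieszFunctional

section SumsOfSquares

theorem sq_X_sub_C_dvd_of_isRoot {R : Type*} [CommRing R] {p : R[X]} {a : R} (hp : p.IsRoot a)
    (hp' : (derivative p).IsRoot a) : (X - C a) ^ 2 ∣ p := by
  rcases eq_or_ne p 0 with rfl | h0
  · exact dvd_zero _
  · exact (le_rootMultiplicity_iff h0).1 ((one_lt_rootMultiplicity_iff_isRoot h0).2 ⟨hp, hp'⟩)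

theorem eval_nonneg_of_eval_mul_nonneg {p q : ℝ[X]} (hp : p ≠ 0) (hp0 : ∀ x, 0 ≤ p.eval x)
    (h : ∀ x, 0 ≤ (p * q).eval x) (x : ℝ) : 0 ≤ q.eval x := by
  have hdense : Dense {x | p.IsRoot x}ᶜ := (finite_setOfPred_isRoot hp).countable.dense_compl ℝ
  refine hdense.induction (P := fun x => 0 ≤ q.eval x) (fun y hy => ?_)
    (isClosed_le continuous_const q.continuous) x
  have hpy : 0 < p.eval y := (hp0 y).lt_of_ne' hy
  exact nonneg_of_mul_nonneg_right (eval_mul (p := p) (q := q) ▸ h y) hpy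

theorem exists_eq_C_add_sq_mul {p : ℝ[X]} (hp : ∀ x, 0 ≤ p.eval x) :
    ∃ (a : ℝ) (q : ℝ[X]), p = C (p.eval a) + (X - C a) ^ 2 * q ∧ ∀ x, 0 ≤ q.eval x := by
  obtain ⟨a, ha⟩ : ∃ a, ∀ x, p.eval a ≤ p.eval x := by
    simpa only [Real.norm_of_nonneg (hp _)] using p.exists_forall_norm_le
  have hderiv : (derivative p).eval a = 0 :=
    IsLocalMin.hasDerivAt_eq_zero (Filter.Eventually.of_forall ha) (p.hasDerivAt a)
  obtain ⟨q, hq⟩ : (X - C a) ^ 2 ∣ p - C (p.eval a) :=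
    sq_X_sub_C_dvd_of_isRoot (by simp) (by simpa using hderiv)
  refine ⟨a, q, by rw [← hq, add_sub_cancel], ?_⟩
  refine eval_nonneg_of_eval_mul_nonneg (pow_ne_zero 2 (X_sub_C_ne_zero a)) (fun x => ?_)
    (fun x => ?_)
  · rw [eval_pow]
    exact sq_nonneg _
  · rw [← hq, eval_sub, eval_C]
    exact sub_nonneg.2 (ha x)

theorem isSumSq_of_eval_nonneg {p : ℝ[X]} (hp : ∀ x, 0 ≤ p.eval x) : IsSumSq p := by
  induction hn : p.natDegree using Nat.strong_induction_on generalizing p with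
  | _ n ih =>
    obtain ⟨a, q, hpq, hq⟩ := exists_eq_C_add_sq_mul hp
    have hC : IsSumSq (C (p.eval a)) := by
      rw [← Real.mul_self_sqrt (hp a), C_mul]
      exact .mul_self _
    have hsq : IsSumSq ((X - C a) ^ 2) := (IsSquare.sq _).isSumSq
    have hqs : IsSumSq q := by
      rcases eq_or_ne q 0 with rfl | hq0
      · exact .zero
      · refine ih _ ?_ hq rfl
        have hdeg : ((X - C a) ^ 2 * q).natDegree = 2 + q.natDegree := by
          rw [((monic_X_sub_C a).pow 2).natDegree_mul' hq0, natDegree_pow, natDegree_X_sub_C]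
        rw [← hn, hpq, natDegree_C_add, hdeg]
        omega
    rw [hpq]
    exact hC.add (hsq.mul hqs)

section Contract

variable {R : Type*} [CommSemiring R]

theorem contract_two_X_mul (p : R[X]) : contract 2 (X * p) = X * contract 2 (divX p) := by
  ext (_ | n)
  · simp [coeff_contract]
  · rw [coeff_contract two_ne_zero, coeff_X_mul, coeff_contract two_ne_zero, coeff_divX,
      show (n + 1) * 2 = n * 2 + 1 + 1 by ring, coeff_X_mul]

theorem eq_expand_contract_add_X_mul (p : R[X]) :
    p = expand R 2 (contract 2 p) + X * expand R 2 (contract 2 (divX p)) := by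
  have hodd : ∀ k, ¬2 ∣ k * 2 + 1 := fun k => by omega
  ext n
  obtain ⟨k, rfl | rfl⟩ := n.even_or_odd'
  · rw [coeff_add, mul_comm 2, coeff_expand_mul two_pos, coeff_contract two_ne_zero]
    rcases k with _ | k
    · rw [zero_mul, coeff_X_mul_zero, add_zero]
    · rw [show (k + 1) * 2 = k * 2 + 1 + 1 by ring, coeff_X_mul, coeff_expand two_pos,
        if_neg (hodd k), add_zero]
  · rw [coeff_add, mul_comm 2, coeff_expand two_pos, if_neg (hodd k), zero_add, coeff_X_mul,
      coeff_expand_mul two_pos, coeff_contract two_ne_zero, coeff_divX]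

theorem contract_two_sq (p : R[X]) :
    contract 2 (p ^ 2) = contract 2 p ^ 2 + X * contract 2 (divX p) ^ 2 := by
  have h : p ^ 2 = p * expand R 2 (contract 2 p) + X * p * expand R 2 (contract 2 (divX p)) := by
    rw [mul_comm X p, mul_assoc, ← mul_add, ← eq_expand_contract_add_X_mul, sq]
  rw [h, contract_add two_ne_zero, contract_mul_expand two_ne_zero, contract_mul_expand two_ne_zero,
    contract_two_X_mul]
  ring

theorem exists_contract_two_eq_of_isSumSq {p : R[X]} (hp : IsSumSq p) :
    ∃ σ τ : R[X], IsSumSq σ ∧ IsSumSq τ ∧ contract 2 p = σ + X * τ := by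
  induction hp with
  | zero => exact ⟨0, 0, .zero, .zero, by ext; simp [coeff_contract]⟩
  | sq_add a _ ih =>
    obtain ⟨σ, τ, hσ, hτ, h⟩ := ih
    refine ⟨_, _, .sq_add (contract 2 a) hσ, .sq_add (contract 2 (divX a)) hτ, ?_⟩
    rw [contract_add two_ne_zero, ← sq, contract_two_sq, h]
    ring

end Contract

theorem exists_eq_isSumSq_add_X_mul_isSumSq {p : ℝ[X]} (hp : ∀ x, 0 ≤ x → 0 ≤ p.eval x) :
    ∃ σ τ : ℝ[X], IsSumSq σ ∧ IsSumSq τ ∧ p = σ + X * τ := by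
  have h : IsSumSq (expand ℝ 2 p) := isSumSq_of_eval_nonneg fun x => by
    rw [expand_eval]
    exact hp _ (sq_nonneg x)
  simpa only [contract_expand 2 two_ne_zero] using exists_contract_two_eq_of_isSumSq h

end SumsOfSquares

section SquarePositiveFunctional

section Ordered

variable {R A : Type*} [CommRing R] [LinearOrder R] [IsStrictOrderedRing R] [CommRing A]
  [Algebra R A] {L : A →ₗ[R] R}

theorem map_nonneg_of_isSumSq (hL : ∀ a, 0 ≤ L (a ^ 2)) {a : A} (ha : IsSumSq a) : 0 ≤ L a := by
  induction ha with
  | zero => rw [map_zero]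
  | sq_add a _ ih =>
    rw [map_add, ← sq]
    exact add_nonneg (hL a) ih

theorem map_mul_sq_le (hL : ∀ a, 0 ≤ L (a ^ 2)) (a b : A) :
    L (a * b) ^ 2 ≤ L (a ^ 2) * L (b ^ 2) := by
  let B : LinearMap.BilinForm R A := (LinearMap.mul R A).compr₂ L
  have hB : ∀ a b, B a b = L (a * b) := fun _ _ => rfl
  have hB0 : ∀ a, 0 ≤ B a a := fun a => by simpa only [hB, ← sq] using hL a
  simpa only [hB, mul_comm b a, ← sq] using B.apply_mul_apply_le_of_forall_zero_le hB0 a b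

end Ordered

theorem exists_ne_zero_dvd_comp {K : Type*} [Field K] {p : K[X]} (hp : p ≠ 0) (f : K[X]) :
    ∃ q : K[X], q ≠ 0 ∧ p ∣ q.comp f := by
  have : FiniteDimensional K (AdjoinRoot p) := (AdjoinRoot.powerBasis hp).finite
  obtain ⟨q, hq, hroot⟩ := Algebra.IsIntegral.isIntegral (R := K) (AdjoinRoot.mkₐ p f)
  refine ⟨q, hq.ne_zero, AdjoinRoot.mk_eq_zero.1 ?_⟩
  rw [← aeval_def, aeval_algHom_apply] at hroot
  exact hroot

theorem map_sq_pos_of_map_comp_sq_pos {K : Type*} [Field K] [LinearOrder K] [IsStrictOrderedRing K]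
    {g : K[X] →ₗ[K] K} (hg : ∀ p, 0 ≤ g (p ^ 2)) {f : K[X]}
    (hf : ∀ q : K[X], q ≠ 0 → 0 < g (q.comp f ^ 2)) {p : K[X]} (hp : p ≠ 0) : 0 < g (p ^ 2) := by
  obtain ⟨q, hq0, r, hqr⟩ := exists_ne_zero_dvd_comp hp f
  refine (hg p).lt_of_ne' fun hgp => (hf q hq0).ne' ?_
  have hle : g (p * (p * r ^ 2)) ^ 2 ≤ 0 := by
    simpa only [hgp, zero_mul] using map_mul_sq_le hg p (p * r ^ 2)
  rw [hqr, show (p * r) ^ 2 = p * (p * r ^ 2) by ring]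
  exact sq_nonpos_iff _ |>.1 hle

end SquarePositiveFunctional

section Extension

theorem exists_extension_along_nonneg {E F : Type*} [AddCommGroup E] [Module ℝ E] [AddCommGroup F]
    [Module ℝ F] (K : PointedCone ℝ E) (i : F →ₗ[ℝ] E) (L : F →ₗ[ℝ] ℝ)
    (hL : ∀ x, i x ∈ K → 0 ≤ L x) (hK : ∀ y, ∃ x, i x + y ∈ K) :
    ∃ g : E →ₗ[ℝ] ℝ, (∀ x, g (i x) = L x) ∧ ∀ y ∈ K, 0 ≤ g y := by
  obtain ⟨r, hr⟩ := i.rangeRestrict.exists_rightInverse_of_surjective i.range_rangeRestrict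
  have hir : ∀ y, i (r y) = y := fun y => congrArg Subtype.val (LinearMap.congr_fun hr y)
  let f : E →ₗ.[ℝ] ℝ := ⟨LinearMap.range i, L ∘ₗ r⟩
  obtain ⟨g, hgf, hg⟩ := riesz_extension K f
    (fun y hy => hL (r y) ((hir y).symm ▸ hy))
    (fun y => (hK y).imp' i.rangeRestrict fun _ hx => hx)
  have hker : ∀ x, i x = 0 → L x = 0 := fun x hx => by
    refine le_antisymm (neg_nonneg.1 ?_) (hL x (hx ▸ K.zero_mem))
    rw [← map_neg]
    exact hL (-x) (by rw [map_neg, hx, neg_zero]; exact K.zero_mem)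
  refine ⟨g, fun x => ?_, hg⟩
  calc g (i x) = L (r (i.rangeRestrict x)) := hgf (i.rangeRestrict x)
    _ = L x := sub_eq_zero.1 <| by
      rw [← map_sub]
      exact hker _ (by rw [map_sub, hir]; exact sub_self (i x))

/-- The cone of real polynomials that are nonnegative on the whole real line. -/
noncomputable def nonnegCone : PointedCone ℝ ℝ[X] :=
  (PointedCone.positive ℝ (ℝ → ℝ)).comap (LinearMap.pi leval)

theorem mem_nonnegCone {p : ℝ[X]} : p ∈ nonnegCone ↔ ∀ x, 0 ≤ p.eval x :=
  Iff.rfl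

theorem exists_expand_add_mem_nonnegCone {d : ℕ} (hd : d ≠ 0) (p : ℝ[X]) :
    ∃ q, expand ℝ d q + p ∈ nonnegCone := by
  induction p using Polynomial.induction_on' with
  | add p₁ p₂ h₁ h₂ =>
    obtain ⟨q₁, hq₁⟩ := h₁
    obtain ⟨q₂, hq₂⟩ := h₂
    refine ⟨q₁ + q₂, ?_⟩
    rw [map_add, add_add_add_comm]
    exact nonnegCone.add_mem hq₁ hq₂
  | monomial k c =>
    refine ⟨C |c| * (1 + X ^ (2 * k)), mem_nonnegCone.2 fun x => ?_⟩
    have hpow : |x| ^ k ≤ 1 + (x ^ d) ^ (2 * k) := by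
      have heven : (x ^ d) ^ (2 * k) = |x| ^ (d * (2 * k)) := by
        rw [← pow_mul, (even_two_mul k).mul_left d |>.pow_abs]
      rw [heven]
      rcases le_total |x| 1 with hx | hx
      · exact le_add_of_le_of_nonneg (pow_le_one₀ (abs_nonneg x) hx) (by positivity)
      · refine le_add_of_nonneg_of_le zero_le_one (pow_le_pow_right₀ hx ?_)
        nlinarith [Nat.pos_of_ne_zero hd]
    have hterm : -(|c| * |x| ^ k) ≤ c * x ^ k := by
      rw [← abs_pow, ← abs_mul]
      exact neg_abs_le _
    simp only [eval_add, expand_eval, eval_mul, eval_C, eval_one, eval_pow, eval_X, eval_monomial]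
    linarith [mul_le_mul_of_nonneg_left hpow (abs_nonneg c)]

end Extension

section Completion

theorem rieszFunctional_nonneg_of_expand_mem_nonnegCone {d : ℕ} (hd : d ≠ 0) {t : ℕ → ℝ}
    (ht : (hankelMatrix t).PosSemidef)
    (ht' : Even d → (hankelMatrix fun k => t (k + 1)).PosSemidef)
    {p : ℝ[X]} (hp : expand ℝ d p ∈ nonnegCone) : 0 ≤ rieszFunctional t p := by
  have hsq := posSemidef_hankelMatrix_iff.1 ht
  have hpow : ∀ x, 0 ≤ p.eval (x ^ d) := fun x => expand_eval d p x ▸ hp x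
  have hp0 : ∀ x, 0 ≤ x → 0 ≤ p.eval x := fun x hx =>
    Real.rpow_inv_natCast_pow hx hd ▸ hpow (x ^ (d : ℝ)⁻¹)
  rcases d.even_or_odd with heven | hodd
  · obtain ⟨σ, τ, hσ, hτ, rfl⟩ := exists_eq_isSumSq_add_X_mul_isSumSq hp0
    rw [map_add, ← rieszFunctional_shift]
    exact add_nonneg (map_nonneg_of_isSumSq hsq hσ)
      (map_nonneg_of_isSumSq (posSemidef_hankelMatrix_iff.1 (ht' heven)) hτ)
  · refine map_nonneg_of_isSumSq hsq (isSumSq_of_eval_nonneg fun x => ?_)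
    rcases le_total 0 x with hx | hx
    · exact hp0 x hx
    · have h := hpow (-(-x) ^ (d : ℝ)⁻¹)
      rwa [hodd.neg_pow, Real.rpow_inv_natCast_pow (neg_nonneg.2 hx) hd, neg_neg] at h

theorem exists_posDef_hankelMatrix_interpolating {d : ℕ} (hd : d ≠ 0) {t : ℕ → ℝ}
    (ht : (hankelMatrix t).PosDef)
    (ht' : Even d → (hankelMatrix fun k => t (k + 1)).PosSemidef) :
    ∃ s : ℕ → ℝ, (∀ k, s (k * d) = t k) ∧ (hankelMatrix s).PosDef := by
  obtain ⟨g, hgt, hg⟩ := exists_extension_along_nonneg nonnegCone (expand ℝ d).toLinearMap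
    (rieszFunctional t)
    (fun _ => rieszFunctional_nonneg_of_expand_mem_nonnegCone hd ht.posSemidef ht')
    (exists_expand_add_mem_nonnegCone hd)
  simp only [AlgHom.toLinearMap_apply] at hgt
  refine ⟨fun k => g (X ^ k), fun k => ?_, posDef_hankelMatrix_iff.2 fun p hp => ?_⟩
  · calc g (X ^ (k * d)) = g (expand ℝ d (monomial k 1)) := by
          rw [expand_monomial, monomial_one_right_eq_X_pow]
      _ = t k := by rw [hgt, rieszFunctional_monomial, one_mul]
  · rw [rieszFunctional_moments]
    refine map_sq_pos_of_map_comp_sq_pos (f := X ^ d) (fun q => hg _ (mem_nonnegCone.2 fun x => ?_))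
      (fun q hq => ?_) hp
    · rw [eval_pow]
      exact sq_nonneg _
    · rw [← expand_eq_comp_X_pow, ← map_pow, hgt]
      exact posDef_hankelMatrix_iff.1 ht q hq

end Completion

end PatternMultiples

open PatternMultiples in
/-- If the pattern `P = dℕ₀` for some `d ≥ 1`, then every partial positive
definite sequence with pattern `P` has a positive definite completion. -/
theorem pattern_multiples_posDef_completable
    (d : ℕ) (hd : 1 ≤ d) (s : ℕ → ℝ)
    (hpart : ∀ R : Finset ℕ, R.Nonempty →
      (∀ r ∈ R, ∀ r' ∈ R, ∃ k : ℕ, r + r' = k * d) →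
      Matrix.PosDef (Matrix.of fun (r r' : R) => s (r.1 + r'.1))) :
    ∃ sc : ℕ → ℝ,
      (∀ k : ℕ, sc (k * d) = s (k * d)) ∧
      (∀ n : ℕ,
        Matrix.PosDef (Matrix.of fun (i j : Fin (n + 1)) => sc ((i : ℕ) + (j : ℕ)))) := by
  have hs : IsPartialPosDef {m | ∃ k, m = k * d} s := hpart
  have ht : (hankelMatrix fun k => s (k * d)).PosDef := by
    simpa using hs.posDef_hankelMatrix (a := 0) (Nat.ne_of_gt hd) fun k => ⟨k, by ring⟩
  have ht' (heven : Even d) : (hankelMatrix fun k => s ((k + 1) * d)).PosDef := by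
    obtain ⟨a, rfl⟩ := heven
    have hidx : ∀ k, 2 * a + k * (a + a) = (k + 1) * (a + a) := fun k => by ring
    simpa only [hidx] using hs.posDef_hankelMatrix (Nat.ne_of_gt hd) fun k => ⟨k + 1, hidx k⟩
  obtain ⟨sc, hsc, hpos⟩ :=
    exists_posDef_hankelMatrix_interpolating (Nat.ne_of_gt hd) ht fun h => (ht' h).posSemidef
  exact ⟨sc, hsc, fun n => hpos.submatrix Fin.val_injective⟩
end

section
/- Let (ℓ_k)_{k∈ℕ₀} be a sequence of natural numbers such that for every a ∈ ℝ the sequence (a^{ℓ_k})_{k∈ℕ₀} is a positive sequence, i.e., every Hankel matrix (a^{ℓ_{.}}) built from it, H_n = (a^{ℓ_{i+j}})_{i,j=0}^n, is positive semidefinite. Then there exists d ∈ ℕ₀ such that ℓ_k = kd + ℓ_0 for all k ∈ ℕ₀, and ℓ_0 is even. -/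
open MeasureTheory

/-!
Positivity of the `2 × 2` principal minors of a Hankel matrix gives
`s (i + j) ^ 2 ≤ s (2 * i) * s (2 * j)`. For `s k = a ^ ℓ k` this compares the exponents
`2 * ℓ (i + j)` and `ℓ (2 * i) + ℓ (2 * j)`, in one direction when `1 < |a|` and in the other when
`0 < |a| < 1`. Hence the two are equal, and this midpoint identity forces `ℓ` to be affine. Its
slope is nonnegative because `ℓ` takes natural values, and `ℓ 0` is even because `a ^ ℓ 0` is
nonnegative for some negative `a`.
-/

section MidpointIdentity

variable {M : Type*} [AddCommMonoid M] [IsAddTorsionFree M]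

theorem map_add_add_map_zero_of_midpoint {A : Type*} [AddZeroClass A] {f : A → M}
    (hf : ∀ i j, 2 • f (i + j) = f (i + i) + f (j + j)) (i j : A) :
    f (i + j) + f 0 = f i + f j := by
  apply nsmul_right_injective two_ne_zero
  have hi : 2 • f i = f (i + i) + f 0 := by simpa only [add_zero] using hf i 0
  have hj : 2 • f j = f (j + j) + f 0 := by simpa only [add_zero] using hf j 0
  calc 2 • (f (i + j) + f 0) = (f (i + i) + f (j + j)) + (f 0 + f 0) := by
        rw [nsmul_add, hf, two_nsmul (f 0)]
    _ = (f (i + i) + f 0) + (f (j + j) + f 0) := add_add_add_comm _ _ _ _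
    _ = 2 • (f i + f j) := by rw [nsmul_add, hi, hj]

theorem map_add_nsmul_map_zero_of_midpoint {f : ℕ → M}
    (hf : ∀ i j, 2 • f (i + j) = f (i + i) + f (j + j)) (k : ℕ) :
    f k + k • f 0 = k • f 1 + f 0 := by
  induction k with
  | zero => simp
  | succ k ih =>
    calc f (k + 1) + (k + 1) • f 0 = (f (k + 1) + f 0) + k • f 0 := by
          rw [succ_nsmul]; abel
      _ = (f k + k • f 0) + f 1 := by
          rw [map_add_add_map_zero_of_midpoint hf]; abel
      _ = (k + 1) • f 1 + f 0 := by rw [ih, succ_nsmul]; abel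

end MidpointIdentity

theorem map_zero_le_map_one_of_midpoint {f : ℕ → ℕ}
    (hf : ∀ i j, 2 * f (i + j) = f (i + i) + f (j + j)) : f 0 ≤ f 1 := by
  by_contra! hlt
  -- A slope of at most `-1` would make `f` negative at `f 0 + 1`.
  have hline : f (f 0 + 1) + (f 0 + 1) * f 0 = (f 0 + 1) * f 1 + f 0 :=
    map_add_nsmul_map_zero_of_midpoint hf (f 0 + 1)
  have hslope : (f 0 + 1) * (f 1 + 1) ≤ (f 0 + 1) * f 0 := Nat.mul_le_mul_left _ hlt
  linarith

theorem exists_eq_mul_add_map_zero_of_midpoint {f : ℕ → ℕ}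
    (hf : ∀ i j, 2 * f (i + j) = f (i + i) + f (j + j)) :
    ∃ d, ∀ k, f k = k * d + f 0 := by
  obtain ⟨d, hd⟩ := Nat.exists_eq_add_of_le (map_zero_le_map_one_of_midpoint hf)
  refine ⟨d, fun k ↦ ?_⟩
  have hline : f k + k * f 0 = k * f 1 + f 0 := map_add_nsmul_map_zero_of_midpoint hf k
  rw [hd] at hline
  linarith

/-- A real sequence is positive if all its Hankel matrices are positive semidefinite; the `n`-th one
has indices `0, …, n`. -/
def IsPositiveSequence (s : ℕ → ℝ) : Prop :=
  ∀ n : ℕ, (Matrix.of fun i j : Fin (n + 1) ↦ s ((i : ℕ) + (j : ℕ))).PosSemidef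

namespace IsPositiveSequence

theorem nonneg_add_self {s : ℕ → ℝ} (hs : IsPositiveSequence s) (i : ℕ) : 0 ≤ s (i + i) := by
  simpa using (hs i).diag_nonneg (i := Fin.last i)

theorem sq_le_mul {s : ℕ → ℝ} (hs : IsPositiveSequence s) (i j : ℕ) :
    s (i + j) ^ 2 ≤ s (i + i) * s (j + j) := by
  have hminor := ((hs (i + j)).submatrix
    ![(⟨i, by omega⟩ : Fin (i + j + 1)), ⟨j, by omega⟩]).det_nonneg
  simp only [Matrix.det_fin_two, Matrix.submatrix_apply, Matrix.of_apply, Matrix.cons_val_zero,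
    Matrix.cons_val_one, Nat.add_comm j i] at hminor
  rw [sq]
  exact sub_nonneg.mp hminor

variable {ℓ : ℕ → ℕ} {a : ℝ}

theorem abs_pow_le_abs_pow (hs : IsPositiveSequence fun k ↦ a ^ ℓ k) (i j : ℕ) :
    |a| ^ (2 * ℓ (i + j)) ≤ |a| ^ (ℓ (i + i) + ℓ (j + j)) := by
  calc |a| ^ (2 * ℓ (i + j)) = (a ^ ℓ (i + j)) ^ 2 := by
        rw [mul_comm, pow_mul, ← abs_pow, sq_abs]
    _ ≤ a ^ ℓ (i + i) * a ^ ℓ (j + j) := hs.sq_le_mul i j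
    _ ≤ |a ^ ℓ (i + i) * a ^ ℓ (j + j)| := le_abs_self _
    _ = |a| ^ (ℓ (i + i) + ℓ (j + j)) := by rw [← pow_add, abs_pow]

theorem two_mul_exponent_eq {b : ℝ} (ha : 1 < |a|) (hb₀ : b ≠ 0) (hb₁ : |b| < 1)
    (hsa : IsPositiveSequence fun k ↦ a ^ ℓ k) (hsb : IsPositiveSequence fun k ↦ b ^ ℓ k)
    (i j : ℕ) : 2 * ℓ (i + j) = ℓ (i + i) + ℓ (j + j) :=
  le_antisymm ((pow_le_pow_iff_right₀ ha).mp (hsa.abs_pow_le_abs_pow i j))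
    ((pow_le_pow_iff_right_of_lt_one₀ (abs_pos.mpr hb₀) hb₁).mp (hsb.abs_pow_le_abs_pow i j))

theorem even_exponent_add_self (ha : a < 0) (hs : IsPositiveSequence fun k ↦ a ^ ℓ k) (i : ℕ) :
    Even (ℓ (i + i)) := by
  by_contra hodd
  exact (hs.nonneg_add_self i).not_gt ((Nat.not_even_iff_odd.mp hodd).pow_neg ha)

end IsPositiveSequence

theorem exponents_of_positive_geometric_sequences_are_arithmetic_general
    {ℓ : ℕ → ℕ} {a b c : ℝ} (ha : 1 < |a|) (hb₀ : b ≠ 0) (hb₁ : |b| < 1) (hc : c < 0)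
    (hsa : IsPositiveSequence fun k ↦ a ^ ℓ k) (hsb : IsPositiveSequence fun k ↦ b ^ ℓ k)
    (hsc : IsPositiveSequence fun k ↦ c ^ ℓ k) :
    (∃ d : ℕ, ∀ k : ℕ, ℓ k = k * d + ℓ 0) ∧ Even (ℓ 0) :=
  ⟨exists_eq_mul_add_map_zero_of_midpoint
      (IsPositiveSequence.two_mul_exponent_eq ha hb₀ hb₁ hsa hsb),
    hsc.even_exponent_add_self hc 0⟩

/-- If `(ℓ k)` is a sequence of natural numbers such that `(a^{ℓ k})` is a
positive sequence (all Hankel matrices positive semidefinite) for every real `a`, then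
`ℓ k = k d + ℓ 0` for some `d ∈ ℕ₀`, and `ℓ 0` is even. -/
theorem exponents_of_positive_geometric_sequences_are_arithmetic
    (ℓ : ℕ → ℕ)
    (hpos : ∀ a : ℝ, ∀ n : ℕ,
      Matrix.PosSemidef
        (Matrix.of fun (i j : Fin (n + 1)) => a ^ ℓ ((i : ℕ) + (j : ℕ)))) :
    (∃ d : ℕ, ∀ k : ℕ, ℓ k = k * d + ℓ 0) ∧ Even (ℓ 0) :=
  exponents_of_positive_geometric_sequences_are_arithmetic_general (a := 2) (b := 1 / 2) (c := -1)
    (by norm_num) (by norm_num) (by norm_num [abs_of_pos]) (by norm_num)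
    (hpos 2) (hpos (1 / 2)) (hpos (-1))
end

section
/- Let (s_k)_{k∈ℕ₀} be a positive sequence and let (ℓ_k)_{k∈ℕ₀} be a sequence of natural numbers such that for every a ∈ ℝ the sequence (a^{ℓ_k})_{k∈ℕ₀} is a positive sequence. Then the subsequence (s̃_k)_{k∈ℕ₀} defined by s̃_k = s_{k+ℓ_k} is a positive sequence. -/
open MeasureTheory

/-!
For `x : ι →₀ ℝ` consider the polynomial `p = ∑ᵢⱼ xᵢ xⱼ X ^ e(i, j)`. Its value at `a` is the
quadratic form of the matrix `(a ^ e(i, j))`, so if these matrices are positive semidefinite for all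
`a`, then `p` is nonnegative on `ℝ`. Any such `p` is a sum of squares, because each complex root `z`
splits off a factor `(X - re z) ^ 2 + (im z) ^ 2`, also when `z` is real. The functional
`X ^ k ↦ s k` of a positive sequence is nonnegative on squares, and its value at `p` is the
quadratic form of the matrix `(s (e(i, j)))`. By the Schur product theorem the exponents
`e(i, j) = i + j + ℓ (i + j)` inherit the hypothesis from `ℓ (i + j)`.
-/

section SumOfSquares

open Polynomial

theorem sq_X_sub_C_dvd_of_isLocalExtr {p : ℝ[X]} {a : ℝ} (hroot : p.IsRoot a)
    (hextr : IsLocalExtr (fun x => p.eval x) a) : (X - C a) ^ 2 ∣ p := by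
  rcases eq_or_ne p 0 with rfl | hp
  · exact dvd_zero _
  have hderiv : p.derivative.IsRoot a := by
    rw [IsRoot.def, ← Polynomial.deriv, hextr.deriv_eq_zero]
  exact (le_rootMultiplicity_iff hp).mp
    ((one_lt_rootMultiplicity_iff_isRoot hp).mpr ⟨hroot, hderiv⟩)

theorem eval_nonneg_of_mul_eval_nonneg {p q : ℝ[X]} (hp : p ≠ 0) (hp_nonneg : ∀ x, 0 ≤ p.eval x)
    (hmul : ∀ x, 0 ≤ (p * q).eval x) (x : ℝ) : 0 ≤ q.eval x := by
  have hdense : Dense {y | p.IsRoot y}ᶜ := (finite_setOfPred_isRoot hp).countable.dense_compl ℝ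
  have hclosed : IsClosed {y | 0 ≤ q.eval y} := isClosed_le continuous_const q.continuous
  refine closure_minimal (fun y hy => ?_) hclosed (hdense x)
  have hpos : 0 < p.eval y := (hp_nonneg y).lt_of_ne' hy
  exact nonneg_of_mul_nonneg_right (eval_mul (p := p) (q := q) ▸ hmul y) hpos

theorem sq_add_sq_dvd_of_aeval_eq_zero {p : ℝ[X]} (hp : ∀ x, 0 ≤ p.eval x) {z : ℂ}
    (hz : aeval z p = 0) : (X - C z.re) ^ 2 + C z.im ^ 2 ∣ p := by
  by_cases him : z.im = 0
  · have hroot : p.IsRoot z.re := by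
      rw [← Complex.re_add_im z, him, Complex.ofReal_zero, zero_mul, add_zero] at hz
      exact Complex.ofReal_injective ((aeval_algebraMap_apply ℂ z.re p).symm.trans hz)
    have hmin : IsLocalMin (fun x => p.eval x) z.re :=
      Filter.Eventually.of_forall fun x => hroot.trans_le (hp x)
    simpa [him] using sq_X_sub_C_dvd_of_isLocalExtr hroot hmin.isExtr
  · convert! quadratic_dvd_of_aeval_eq_zero_im_ne_zero p hz him using 1
    rw [Complex.sq_norm, Complex.normSq_apply]
    simp only [C_mul, C_add, C_ofNat]
    ring

theorem isSumSq_of_forall_eval_nonneg {p : ℝ[X]} (hp : ∀ x, 0 ≤ p.eval x) : IsSumSq p := by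
  induction hn : p.natDegree using Nat.strong_induction_on generalizing p with
  | _ n ih =>
  subst hn
  by_cases hdeg : p.natDegree = 0
  · obtain ⟨c, rfl⟩ := natDegree_eq_zero.mp hdeg
    have hc : 0 ≤ c := by simpa using hp 0
    exact ((Real.isSquare_iff.mpr hc).map C).isSumSq
  have hp0 : p ≠ 0 := ne_zero_of_natDegree_gt (Nat.pos_of_ne_zero hdeg)
  obtain ⟨z, hz⟩ := IsAlgClosed.exists_aeval_eq_zero ℂ p (mt natDegree_eq_of_degree_eq_some hdeg)
  obtain ⟨q, hq⟩ := sq_add_sq_dvd_of_aeval_eq_zero hp hz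
  set d : ℝ[X] := (X - C z.re) ^ 2 + C z.im ^ 2 with hd
  have hd_sumSq : IsSumSq d := (IsSquare.sq _).isSumSq.add (IsSquare.sq _).isSumSq
  have hd_nonneg (x : ℝ) : 0 ≤ d.eval x := by
    simp only [hd, eval_add, eval_pow, eval_sub, eval_X, eval_C]
    positivity
  have hd_natDegree : d.natDegree = 2 := by
    rw [hd]
    compute_degree!
  have hd0 : d ≠ 0 := by intro h; simp [h] at hd_natDegree
  have hq0 : q ≠ 0 := right_ne_zero_of_mul (hq ▸ hp0)
  have hq_lt : q.natDegree < p.natDegree := by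
    rw [hq, natDegree_mul hd0 hq0, hd_natDegree]
    omega
  rw [hq]
  exact hd_sumSq.mul (ih _ hq_lt (eval_nonneg_of_mul_eval_nonneg hd0 hd_nonneg (hq ▸ hp)) rfl)

end SumOfSquares

section RieszFunctional

open Polynomial

variable {R ι : Type*} [CommSemiring R]

/-- The Riesz functional of a sequence `s`: the linear functional on polynomials sending `X ^ k` to
`s k`. -/
noncomputable def rieszFunctional (s : ℕ → R) : R[X] →ₗ[R] R :=
  lsum fun k => LinearMap.mulLeft R (s k)

/-- The polynomial `∑ᵢⱼ xᵢ xⱼ X ^ e(i, j)`, through which the quadratic forms of all matrices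
`(s (e(i, j)))` are expressed by Riesz functionals. -/
noncomputable def quadraticFormPolynomial (e : ι → ι → ℕ) (x : ι →₀ R) : R[X] :=
  x.sum fun i a => x.sum fun j b => monomial (e i j) (a * b)

theorem rieszFunctional_monomial (s : ℕ → R) (k : ℕ) (c : R) :
    rieszFunctional s (monomial k c) = s k * c := by
  simp [rieszFunctional]

theorem rieszFunctional_pow (a : R) (p : R[X]) : rieszFunctional (fun k => a ^ k) p = p.eval a := by
  induction p using Polynomial.induction_on' with
  | add p q hp hq => rw [map_add, eval_add, hp, hq]
  | monomial k c => rw [rieszFunctional_monomial, eval_monomial, mul_comm]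

theorem rieszFunctional_quadraticFormPolynomial (s : ℕ → R) (e : ι → ι → ℕ) (x : ι →₀ R) :
    rieszFunctional s (quadraticFormPolynomial e x) =
      x.sum fun i a => x.sum fun j b => a * s (e i j) * b := by
  simp only [quadraticFormPolynomial, map_finsuppSum, rieszFunctional_monomial, mul_left_comm,
    mul_assoc]

theorem quadraticFormPolynomial_add (f : ι → ℕ) (x : ι →₀ R) :
    quadraticFormPolynomial (fun i j => f i + f j) x =
      (x.sum fun i a => monomial (f i) a) * x.sum fun i a => monomial (f i) a := by
  simp only [quadraticFormPolynomial, Finsupp.sum, Finset.sum_mul_sum, monomial_mul_monomial]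

theorem posSemidef_iff_rieszFunctional_nonneg {s : ℕ → ℝ} {e : ι → ι → ℕ}
    (he : ∀ i j, e i j = e j i) :
    (Matrix.of fun i j => s (e i j)).PosSemidef ↔
      ∀ x, 0 ≤ rieszFunctional s (quadraticFormPolynomial e x) := by
  have hherm : (Matrix.of fun i j => s (e i j)).IsHermitian :=
    Matrix.IsHermitian.ext fun i j => congrArg s (he j i)
  simp only [rieszFunctional_quadraticFormPolynomial, Matrix.PosSemidef, hherm, true_and,
    star_trivial, Matrix.of_apply]

theorem rieszFunctional_mul_self_nonneg {s : ℕ → ℝ}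
    (hs : ∀ n : ℕ, (Matrix.of fun i j : Fin (n + 1) => s (i + j)).PosSemidef) (p : ℝ[X]) :
    0 ≤ rieszFunctional s (p * p) := by
  let x : Fin (p.natDegree + 1) →₀ ℝ := Finsupp.equivFunOnFinite.symm fun i => p.coeff i
  have hx : (x.sum fun i a => monomial (i : ℕ) a) = p := by
    rw [Finsupp.sum_fintype _ _ fun i => monomial_zero_right _]
    exact (Fin.sum_univ_eq_sum_range (fun k => monomial k (p.coeff k)) _).trans
      p.as_sum_range.symm
  have hsymm (i j : Fin (p.natDegree + 1)) : (i + j : ℕ) = j + i := add_comm _ _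
  have h := (posSemidef_iff_rieszFunctional_nonneg hsymm).mp (hs p.natDegree) x
  rwa [quadraticFormPolynomial_add, hx] at h

theorem rieszFunctional_nonneg_of_isSumSq {s : ℕ → ℝ}
    (hs : ∀ n : ℕ, (Matrix.of fun i j : Fin (n + 1) => s (i + j)).PosSemidef) {p : ℝ[X]}
    (hp : IsSumSq p) : 0 ≤ rieszFunctional s p := by
  induction hp with
  | zero => rw [map_zero]
  | sq_add q _ ih =>
    rw [map_add]
    exact add_nonneg (rieszFunctional_mul_self_nonneg hs q) ih

end RieszFunctional

theorem posSemidef_pow_add_add {ι : Type*} [Finite ι] {a : ℝ} {e : ι → ι → ℕ}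
    (he : (Matrix.of fun i j => a ^ e i j).PosSemidef) (f : ι → ℕ) :
    (Matrix.of fun i j => a ^ (f i + f j + e i j)).PosSemidef := by
  convert! (Matrix.posSemidef_vecMulVec_self_star fun i => a ^ f i).hadamard he using 1
  ext i j
  simp [Matrix.vecMulVec_apply, pow_add]

theorem subsequence_positive_of_geometric_positive_general {ι : Type*} {s : ℕ → ℝ}
    (hs : ∀ n : ℕ, (Matrix.of fun i j : Fin (n + 1) => s (i + j)).PosSemidef) {e : ι → ι → ℕ}
    (he : ∀ a : ℝ, (Matrix.of fun i j => a ^ e i j).PosSemidef) :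
    (Matrix.of fun i j => s (e i j)).PosSemidef := by
  have hsymm (i j : ι) : e i j = e j i :=
    pow_right_injective₀ two_pos (by norm_num) ((he 2).isHermitian.apply j i)
  refine (posSemidef_iff_rieszFunctional_nonneg hsymm).mpr fun x =>
    rieszFunctional_nonneg_of_isSumSq hs (isSumSq_of_forall_eval_nonneg fun a => ?_)
  rw [← rieszFunctional_pow]
  exact (posSemidef_iff_rieszFunctional_nonneg hsymm).mp (he a) x

/-- If `s` is a positive sequence and `(ℓ k)` is a sequence of naturals such
that `(a^{ℓ k})` is a positive sequence for every real `a`, then the subsequence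
`s̃ k = s (k + ℓ k)` is a positive sequence. -/
theorem subsequence_positive_of_geometric_positive
    (s : ℕ → ℝ)
    (hs : ∀ n : ℕ,
      Matrix.PosSemidef (Matrix.of fun (i j : Fin (n + 1)) => s ((i : ℕ) + (j : ℕ))))
    (ℓ : ℕ → ℕ)
    (hℓ : ∀ a : ℝ, ∀ n : ℕ,
      Matrix.PosSemidef
        (Matrix.of fun (i j : Fin (n + 1)) => a ^ ℓ ((i : ℕ) + (j : ℕ)))) :
    ∀ n : ℕ,
      Matrix.PosSemidef
        (Matrix.of fun (i j : Fin (n + 1)) =>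
          s (((i : ℕ) + (j : ℕ)) + ℓ ((i : ℕ) + (j : ℕ)))) := by
  intro n
  exact subsequence_positive_of_geometric_positive_general hs fun a =>
    posSemidef_pow_add_add (hℓ a n) fun i => i
end

section
/- Let σ and σ̃ be nonnegative Borel measures on ℝ with all moments finite, let d ∈ ℕ with d ≥ 1 and ℓ₀ an even natural number, and suppose ∫_ℝ x^{kd+ℓ₀} dσ(x) = ∫_ℝ x^k dσ̃(x) for all k ∈ ℕ₀. Assume the Hamburger moment sequence s̃_k = ∫_ℝ x^k dσ̃(x) is determinate. Then for every Borel function f : ℝ → ℝ that is σ̃-integrable, the function x ↦ f(x^d) x^{ℓ₀} is σ-integrable and ∫_ℝ f(x^d) x^{ℓ₀} dσ(x) = ∫_ℝ f(x) dσ̃(x). -/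
open MeasureTheory

/-! The moments of the image of `x ^ ℓ₀ dσ` under `x ↦ x ^ d` are `∫ x ^ (k * d + ℓ₀) dσ`, so by
determinacy this image is `σ̃` itself, and the substitution is a change of variables. Evenness of
`ℓ₀` makes the weighted measure nonnegative. -/

section WeightedMap

variable {α β E : Type*} [MeasurableSpace α] [MeasurableSpace β] [NormedAddCommGroup E]
  [NormedSpace ℝ E] {μ : Measure α} {w : α → ℝ} {φ : α → β} {f : β → E}

/-- The image under `φ` of the measure with density `w` with respect to `μ`, through which
a weighted substitution `∫ w • (f ∘ φ) ∂μ` becomes an integral of `f`. Negative values of `w` are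
truncated to `0`, and the measure is `0` if `φ` is not a.e. measurable. -/
noncomputable def weightedMap (μ : Measure α) (w : α → ℝ) (φ : α → β) : Measure β :=
  (μ.withDensity fun x ↦ ENNReal.ofReal (w x)).map φ

theorem toReal_ofReal_smul_ae_eq (hw₀ : 0 ≤ᵐ[μ] w) (g : α → E) :
    (fun x ↦ (ENNReal.ofReal (w x)).toReal • g x) =ᵐ[μ] fun x ↦ w x • g x := by
  filter_upwards [hw₀] with x hx
  rw [ENNReal.toReal_ofReal hx]

theorem integrable_weightedMap_iff (hw : AEMeasurable w μ) (hw₀ : 0 ≤ᵐ[μ] w)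
    (hφ : AEMeasurable φ μ) (hf : AEStronglyMeasurable f (weightedMap μ w φ)) :
    Integrable f (weightedMap μ w φ) ↔ Integrable (fun x ↦ w x • f (φ x)) μ :=
  calc
    Integrable f (weightedMap μ w φ) ↔
        Integrable (f ∘ φ) (μ.withDensity fun x ↦ ENNReal.ofReal (w x)) :=
        integrable_map_measure hf (hφ.mono_ac (withDensity_absolutelyContinuous _ _))
    _ ↔ Integrable (fun x ↦ (ENNReal.ofReal (w x)).toReal • f (φ x)) μ :=
        integrable_withDensity_iff_integrable_smul₀' hw.ennreal_ofReal
          (.of_forall fun _ ↦ ENNReal.ofReal_lt_top)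
    _ ↔ Integrable (fun x ↦ w x • f (φ x)) μ :=
        integrable_congr (toReal_ofReal_smul_ae_eq hw₀ _)

theorem integral_weightedMap (hw : AEMeasurable w μ) (hw₀ : 0 ≤ᵐ[μ] w)
    (hφ : AEMeasurable φ μ) (hf : AEStronglyMeasurable f (weightedMap μ w φ)) :
    ∫ y, f y ∂weightedMap μ w φ = ∫ x, w x • f (φ x) ∂μ :=
  calc
    ∫ y, f y ∂weightedMap μ w φ =
        ∫ x, f (φ x) ∂μ.withDensity fun x ↦ ENNReal.ofReal (w x) :=
        integral_map (hφ.mono_ac (withDensity_absolutelyContinuous _ _)) hf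
    _ = ∫ x, (ENNReal.ofReal (w x)).toReal • f (φ x) ∂μ :=
        integral_withDensity_eq_integral_toReal_smul₀ hw.ennreal_ofReal
          (.of_forall fun _ ↦ ENNReal.ofReal_lt_top) _
    _ = ∫ x, w x • f (φ x) ∂μ :=
        integral_congr_ae (toReal_ofReal_smul_ae_eq hw₀ _)

end WeightedMap

/-- Determinacy of the Hamburger moment problem with data `∫ x ^ k ∂ν`: no measure other than `ν`
has finite moments of all orders and these values. Finiteness of the moments of `ν` itself is not
part of the definition. -/
def IsMomentDeterminate (ν : Measure ℝ) : Prop :=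
  ∀ μ : Measure ℝ, (∀ k : ℕ, Integrable (fun x : ℝ ↦ x ^ k) μ) →
    (∀ k : ℕ, ∫ x, x ^ k ∂μ = ∫ x, x ^ k ∂ν) → μ = ν

section Determinate

variable {α E : Type*} [MeasurableSpace α] [NormedAddCommGroup E] [NormedSpace ℝ E]
  {μ : Measure α} {ν : Measure ℝ} {w φ : α → ℝ}

theorem IsMomentDeterminate.weightedMap_eq (hν : IsMomentDeterminate ν)
    (hw : AEMeasurable w μ) (hw₀ : 0 ≤ᵐ[μ] w) (hφ : AEMeasurable φ μ)
    (hint : ∀ k : ℕ, Integrable (fun x ↦ w x * φ x ^ k) μ)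
    (hmom : ∀ k : ℕ, ∫ x, w x * φ x ^ k ∂μ = ∫ y, y ^ k ∂ν) :
    weightedMap μ w φ = ν := by
  have hpow (k : ℕ) : AEStronglyMeasurable (fun y : ℝ ↦ y ^ k) (weightedMap μ w φ) := by
    fun_prop
  refine hν _ (fun k ↦ ?_) fun k ↦ ?_
  · exact (integrable_weightedMap_iff hw hw₀ hφ (hpow k)).2 (hint k)
  · exact (integral_weightedMap hw hw₀ hφ (hpow k)).trans (hmom k)

theorem integral_substitution_of_determinate_general
    (hν : IsMomentDeterminate ν)
    (hw : AEMeasurable w μ) (hw₀ : 0 ≤ᵐ[μ] w) (hφ : AEMeasurable φ μ)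
    (hint : ∀ k : ℕ, Integrable (fun x ↦ w x * φ x ^ k) μ)
    (hmom : ∀ k : ℕ, ∫ x, w x * φ x ^ k ∂μ = ∫ y, y ^ k ∂ν)
    {f : ℝ → E} (hf : Integrable f ν) :
    Integrable (fun x ↦ w x • f (φ x)) μ ∧ ∫ x, w x • f (φ x) ∂μ = ∫ y, f y ∂ν := by
  obtain rfl := hν.weightedMap_eq hw hw₀ hφ hint hmom
  have hfm := hf.aestronglyMeasurable
  exact ⟨(integrable_weightedMap_iff hw hw₀ hφ hfm).1 hf,
    (integral_weightedMap hw hw₀ hφ hfm).symm⟩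

end Determinate

/-- Suppose `∫ x^{kd+ℓ₀} dσ = ∫ x^k dσ̃` for all `k`, with `d ≥ 1`, `ℓ₀`
even, and the moment sequence of `σ̃` is determinate. Then for every Borel `σ̃`-integrable
`f : ℝ → ℝ`, the function `x ↦ f(x^d) x^{ℓ₀}` is `σ`-integrable and
`∫ f(x^d) x^{ℓ₀} dσ = ∫ f dσ̃`. -/
theorem integral_substitution_of_determinate
    (σ σt : Measure ℝ)
    (hintσ : ∀ k : ℕ, Integrable (fun x : ℝ => x ^ k) σ)
    (hintσt : ∀ k : ℕ, Integrable (fun x : ℝ => x ^ k) σt)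
    (d ℓ₀ : ℕ) (hd : 1 ≤ d) (hℓ₀ : Even ℓ₀)
    (hmom : ∀ k : ℕ, ∫ x, x ^ (k * d + ℓ₀) ∂σ = ∫ x, x ^ k ∂σt)
    (hdet : ∀ μ : Measure ℝ,
      (∀ k : ℕ, Integrable (fun x : ℝ => x ^ k) μ) →
      (∀ k : ℕ, ∫ x, x ^ k ∂μ = ∫ x, x ^ k ∂σt) → μ = σt) :
    ∀ f : ℝ → ℝ, Measurable f → Integrable f σt →
      Integrable (fun x : ℝ => f (x ^ d) * x ^ ℓ₀) σ ∧
      ∫ x, f (x ^ d) * x ^ ℓ₀ ∂σ = ∫ x, f x ∂σt := by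
  intro f _ hf
  have hpow (k : ℕ) (x : ℝ) : x ^ ℓ₀ * (x ^ d) ^ k = x ^ (k * d + ℓ₀) := by ring
  simpa only [smul_eq_mul, mul_comm (_ ^ ℓ₀)] using
    integral_substitution_of_determinate_general (w := (· ^ ℓ₀)) (φ := (· ^ d)) hdet
      (by fun_prop) (.of_forall hℓ₀.pow_nonneg) (by fun_prop)
      (by simpa only [hpow] using fun k ↦ hintσ (k * d + ℓ₀))
      (by simpa only [hpow] using hmom) hf
end

section
/- Let σ and σ̃ be nonnegative Borel measures on ℝ with all moments finite, let ℓ₀ be an even natural number, suppose ∫_ℝ x^{k+ℓ₀} dσ(x) = ∫_ℝ x^k dσ̃(x) for all k ∈ ℕ₀, and assume the Hamburger moment sequence s̃_k = ∫_ℝ x^k dσ̃(x) is determinate. Let s_k = ∫_ℝ x^k dσ(x). Then for every λ ∈ ℂ with Im λ ≠ 0, ∫_ℝ 1/(x − λ) dσ̃(x) = C + λ^{ℓ₀} ∫_ℝ 1/(x − λ) dσ(x), where C = Σ_{j=0}^{ℓ₀−1} λ^j s_{ℓ₀−1−j} is a constant depending only on λ and the moments of σ. -/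
open MeasureTheory

/-!
Since `x ^ ℓ₀ ≥ 0`, the measure `x ^ ℓ₀ dσ` is nonnegative, and it has the same moments as `σ̃`, so
determinacy forces `σ̃ = x ^ ℓ₀ dσ`. Polynomial division of `x ^ ℓ₀` by `x - λ` gives
`x ^ ℓ₀ / (x - λ) = ∑ j < ℓ₀, λ ^ j x ^ (ℓ₀ - 1 - j) + λ ^ ℓ₀ / (x - λ)`, which is integrated
against `σ` term by term.
-/

section WithDensityOfReal

variable {α E : Type*} {mα : MeasurableSpace α} [NormedAddCommGroup E] [NormedSpace ℝ E]
  {μ : Measure α} {f : α → ℝ}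

theorem integrable_withDensity_ofReal_iff (hf : AEMeasurable f μ) (hf_nonneg : ∀ᵐ x ∂μ, 0 ≤ f x)
    {g : α → E} :
    Integrable g (μ.withDensity fun x => ENNReal.ofReal (f x)) ↔
      Integrable (fun x => f x • g x) μ := by
  rw [integrable_withDensity_iff_integrable_smul₀' hf.ennreal_ofReal (by simp)]
  refine integrable_congr ?_
  filter_upwards [hf_nonneg] with x hx
  rw [ENNReal.toReal_ofReal hx]

theorem integral_withDensity_ofReal (hf : AEMeasurable f μ) (hf_nonneg : ∀ᵐ x ∂μ, 0 ≤ f x)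
    (g : α → E) :
    ∫ x, g x ∂μ.withDensity (fun x => ENNReal.ofReal (f x)) = ∫ x, f x • g x ∂μ := by
  rw [integral_withDensity_eq_integral_toReal_smul₀ hf.ennreal_ofReal (by simp)]
  refine integral_congr_ae ?_
  filter_upwards [hf_nonneg] with x hx
  rw [ENNReal.toReal_ofReal hx]

end WithDensityOfReal

theorem withDensity_pow_eq_of_moments_eq {σ ν : Measure ℝ} {n : ℕ}
    (hnonneg : ∀ᵐ x ∂σ, 0 ≤ x ^ n)
    (hint : ∀ k : ℕ, Integrable (fun x : ℝ => x ^ (k + n)) σ)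
    (hmom : ∀ k : ℕ, ∫ x, x ^ (k + n) ∂σ = ∫ x, x ^ k ∂ν)
    (hdet : ∀ μ : Measure ℝ,
      (∀ k : ℕ, Integrable (fun x : ℝ => x ^ k) μ) →
      (∀ k : ℕ, ∫ x, x ^ k ∂μ = ∫ x, x ^ k ∂ν) → μ = ν) :
    σ.withDensity (fun x => ENNReal.ofReal (x ^ n)) = ν := by
  have hmeas : AEMeasurable (fun x : ℝ => x ^ n) σ := by fun_prop
  have hpow (k : ℕ) (x : ℝ) : x ^ n • x ^ k = x ^ (k + n) := by rw [smul_eq_mul, pow_add, mul_comm]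
  refine hdet _ (fun k => ?_) (fun k => ?_)
  · rw [integrable_withDensity_ofReal_iff hmeas hnonneg]
    simpa only [hpow] using hint k
  · rw [integral_withDensity_ofReal hmeas hnonneg]
    simpa only [hpow] using hmom k

theorem pow_mul_one_div_sub {K : Type*} [Field K] {x z : K} (hxz : x ≠ z) (n : ℕ) :
    x ^ n * (1 / (x - z)) =
      ∑ j ∈ Finset.range n, z ^ j * x ^ (n - 1 - j) + z ^ n * (1 / (x - z)) := by
  have hsub : x - z ≠ 0 := sub_ne_zero.2 hxz
  field_simp
  linear_combination (Commute.all z x).geom_sum₂_mul n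

theorem integral_one_div_sub_withDensity_pow {σ : Measure ℝ} {n : ℕ} {z : ℂ}
    (hnonneg : ∀ᵐ x ∂σ, 0 ≤ x ^ n)
    (hpow : ∀ k < n, Integrable (fun x : ℝ => x ^ k) σ)
    (hne : ∀ᵐ x : ℝ ∂σ, (x : ℂ) ≠ z)
    (hker : Integrable (fun x : ℝ => 1 / ((x : ℂ) - z)) σ) :
    ∫ x : ℝ, 1 / ((x : ℂ) - z) ∂σ.withDensity (fun x => ENNReal.ofReal (x ^ n)) =
      ∑ j ∈ Finset.range n, z ^ j * ((∫ x, x ^ (n - 1 - j) ∂σ : ℝ) : ℂ) +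
        z ^ n * ∫ x : ℝ, 1 / ((x : ℂ) - z) ∂σ := by
  have hterm : ∀ j ∈ Finset.range n,
      Integrable (fun x : ℝ => z ^ j * ((x ^ (n - 1 - j) : ℝ) : ℂ)) σ := fun j hj =>
    (hpow _ (by grind)).ofReal.const_mul _
  calc
    _ = ∫ x : ℝ, x ^ n • (1 / ((x : ℂ) - z)) ∂σ :=
      integral_withDensity_ofReal (by fun_prop) hnonneg _
    _ = ∫ x : ℝ, (∑ j ∈ Finset.range n, z ^ j * ((x ^ (n - 1 - j) : ℝ) : ℂ) +
          z ^ n * (1 / ((x : ℂ) - z))) ∂σ := by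
      refine integral_congr_ae ?_
      filter_upwards [hne] with x hx
      simpa only [Complex.real_smul, Complex.ofReal_pow] using pow_mul_one_div_sub hx n
    _ = _ := by
      rw [integral_add (integrable_finsetSum _ hterm) (hker.const_mul _),
        integral_finsetSum _ hterm]
      simp only [integral_const_mul, integral_complex_ofReal]

theorem integrable_one_div_ofReal_sub {μ : Measure ℝ} [IsFiniteMeasure μ] {z : ℂ}
    (hz : z.im ≠ 0) : Integrable (fun x : ℝ => 1 / ((x : ℂ) - z)) μ := by
  refine .of_bound (Measurable.aestronglyMeasurable (by fun_prop)) (1 / |z.im|) (.of_forall ?_)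
  intro x
  have him : |z.im| ≤ ‖(x : ℂ) - z‖ := by
    simpa using Complex.abs_im_le_norm ((x : ℂ) - z)
  rw [norm_div, norm_one]
  exact one_div_le_one_div_of_le (abs_pos.2 hz) him

theorem cauchy_transform_shift_relation_general
    (σ σt : Measure ℝ)
    (hintσ : ∀ k : ℕ, Integrable (fun x : ℝ => x ^ k) σ)
    (ℓ₀ : ℕ) (hnonneg : ∀ᵐ x ∂σ, 0 ≤ x ^ ℓ₀)
    (hmom : ∀ k : ℕ, ∫ x, x ^ (k + ℓ₀) ∂σ = ∫ x, x ^ k ∂σt)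
    (hdet : ∀ μ : Measure ℝ,
      (∀ k : ℕ, Integrable (fun x : ℝ => x ^ k) μ) →
      (∀ k : ℕ, ∫ x, x ^ k ∂μ = ∫ x, x ^ k ∂σt) → μ = σt)
    (s : ℕ → ℝ) (hs : ∀ k : ℕ, s k = ∫ x, x ^ k ∂σ)
    (lam : ℂ) (hne : ∀ᵐ x : ℝ ∂σ, (x : ℂ) ≠ lam)
    (hker : Integrable (fun x : ℝ => 1 / ((x : ℂ) - lam)) σ) :
    ∫ x : ℝ, 1 / ((x : ℂ) - lam) ∂σt =
      (∑ j ∈ Finset.range ℓ₀, lam ^ j * (s (ℓ₀ - 1 - j) : ℂ)) +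
        lam ^ ℓ₀ * ∫ x : ℝ, 1 / ((x : ℂ) - lam) ∂σ := by
  have hσt : σ.withDensity (fun x => ENNReal.ofReal (x ^ ℓ₀)) = σt :=
    withDensity_pow_eq_of_moments_eq hnonneg (fun k => hintσ (k + ℓ₀)) hmom hdet
  simp only [hs]
  rw [← hσt, integral_one_div_sub_withDensity_pow hnonneg (fun k _ => hintσ k) hne hker]

/-- Suppose `∫ x^{k+ℓ₀} dσ = ∫ x^k dσ̃` for all `k`, with `ℓ₀` even and the
moment sequence of `σ̃` determinate. With `s k = ∫ x^k dσ`, for every `λ ∈ ℂ` with `Im λ ≠ 0`,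
`∫ 1/(x − λ) dσ̃ = C + λ^{ℓ₀} ∫ 1/(x − λ) dσ` where
`C = Σ_{j=0}^{ℓ₀−1} λ^j s_{ℓ₀−1−j}`. -/
theorem cauchy_transform_shift_relation
    (σ σt : Measure ℝ)
    (hintσ : ∀ k : ℕ, Integrable (fun x : ℝ => x ^ k) σ)
    (hintσt : ∀ k : ℕ, Integrable (fun x : ℝ => x ^ k) σt)
    (ℓ₀ : ℕ) (hℓ₀ : Even ℓ₀)
    (hmom : ∀ k : ℕ, ∫ x, x ^ (k + ℓ₀) ∂σ = ∫ x, x ^ k ∂σt)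
    (hdet : ∀ μ : Measure ℝ,
      (∀ k : ℕ, Integrable (fun x : ℝ => x ^ k) μ) →
      (∀ k : ℕ, ∫ x, x ^ k ∂μ = ∫ x, x ^ k ∂σt) → μ = σt)
    (s : ℕ → ℝ) (hs : ∀ k : ℕ, s k = ∫ x, x ^ k ∂σ) :
    ∀ lam : ℂ, lam.im ≠ 0 →
      ∫ x : ℝ, 1 / ((x : ℂ) - lam) ∂σt =
        (∑ j ∈ Finset.range ℓ₀, lam ^ j * (s (ℓ₀ - 1 - j) : ℂ)) +
          lam ^ ℓ₀ * ∫ x : ℝ, 1 / ((x : ℂ) - lam) ∂σ := by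
  intro lam hlam
  have : IsFiniteMeasure σ :=
    (integrable_const_iff_isFiniteMeasure one_ne_zero).1 (by simpa using hintσ 0)
  exact cauchy_transform_shift_relation_general σ σt hintσ ℓ₀ (.of_forall fun x => hℓ₀.pow_nonneg x)
    hmom hdet s hs lam (.of_forall fun x hx => hlam (by simp [← hx]))
    (integrable_one_div_ofReal_sub hlam)
end

section
/- Every real sequence is a moment sequence of a signed measure: for any sequence (t_k)_{k∈ℕ₀} of real numbers there exists a signed Borel measure μ on ℝ of bounded variation (i.e., with finite total variation) such that all moments of its total variation measure are finite and ∫_ℝ x^k dμ(x) = t_k for all k ∈ ℕ₀. -/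
open MeasureTheory

/-!
Only finitely many blocks of atoms contribute to a given moment: the `n`-th block has vanishing
moments of order `< n` and prescribed moment of order `n`, so the blocks can be chosen successively
to match `t 0, t 1, …`. Such a block is an `n`-th finite difference. Dilating it by `R` while
keeping its `n`-th moment fixed multiplies its absolute moments of order `k < n` by `R ^ (k - n)`;
for `R` large they are at most `2⁻ⁿ`, so the sum of all blocks has finite absolute moments.
-/

section JordanDecomposition

variable {α E : Type*} {_ : MeasurableSpace α} [NormedAddCommGroup E] {μ ν : Measure α}
  [IsFiniteMeasure μ] [IsFiniteMeasure ν] {f : α → E}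

lemma integrable_totalVariation_toSignedMeasure_sub (hμ : Integrable f μ) (hν : Integrable f ν) :
    Integrable f (μ.toSignedMeasure - ν.toSignedMeasure).totalVariation := by
  rw [SignedMeasure.totalVariation, Measure.toJordanDecomposition_toSignedMeasure_sub]
  exact (hμ.mono_measure Measure.sub_le).add_measure (hν.mono_measure Measure.sub_le)

lemma integral_posPart_sub_integral_negPart_toSignedMeasure_sub [NormedSpace ℝ E]
    (hμ : Integrable f μ) (hν : Integrable f ν) :
    ∫ a, f a ∂(μ.toSignedMeasure - ν.toSignedMeasure).toJordanDecomposition.posPart -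
        ∫ a, f a ∂(μ.toSignedMeasure - ν.toSignedMeasure).toJordanDecomposition.negPart =
      ∫ a, f a ∂μ - ∫ a, f a ∂ν := by
  have integrable_toSignedMeasure {ρ : Measure α} [IsFiniteMeasure ρ] (h : Integrable f ρ) :
      ρ.toSignedMeasure.Integrable f := by
    rwa [VectorMeasure.Integrable, Measure.variation_toSignedMeasure]
  simp only [Measure.toJordanDecomposition_toSignedMeasure_sub,
    Measure.jordanDecompositionOfToSignedMeasureSub_posPart,
    Measure.jordanDecompositionOfToSignedMeasureSub_negPart,
    ← VectorMeasure.integral_toSignedMeasure]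
  rw [← VectorMeasure.integral_sub_vectorMeasure
      (integrable_toSignedMeasure (hμ.mono_measure Measure.sub_le))
      (integrable_toSignedMeasure (hν.mono_measure Measure.sub_le)),
    ← VectorMeasure.integral_sub_vectorMeasure
      (integrable_toSignedMeasure hμ) (integrable_toSignedMeasure hν),
    ← Measure.sub_toSignedMeasure_eq_toSignedMeasure_sub]

end JordanDecomposition

section AtomicMeasure

variable {ι α : Type*} [MeasurableSpace α]

/-- The sum of the positively weighted atoms among `w i • δ (x i)`. Negative weights are truncated
to `0`, so the signed measure with all these atoms is `atomicMeasure w x - atomicMeasure (-w) x`. -/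
noncomputable def atomicMeasure (w : ι → ℝ) (x : ι → α) : Measure α :=
  .sum fun i ↦ ENNReal.ofReal (w i) • .dirac (x i)

variable [MeasurableSingletonClass α] {E : Type*} [NormedAddCommGroup E]
  [NormedSpace ℝ E] {w : ι → ℝ} {x : ι → α} {f : α → E}

lemma hasSum_integral_atomicMeasure [CompleteSpace E] (hf : Integrable f (atomicMeasure w x)) :
    HasSum (fun i ↦ max (w i) 0 • f (x i)) (∫ a, f a ∂atomicMeasure w x) := by
  simpa only [integral_smul_measure, integral_dirac, ENNReal.toReal_ofReal'] using!
    hasSum_integral_measure hf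

variable [Countable ι]

lemma integrable_atomicMeasure (h : Summable fun i ↦ ‖w i • f (x i)‖) :
    Integrable f (atomicMeasure w x) := by
  refine integrable_sum_dirac (fun _ ↦ ENNReal.ofReal_ne_top) ?_
  refine h.of_nonneg_of_le (fun i ↦ by positivity) fun i ↦ ?_
  rw [ENNReal.toReal_ofReal', norm_smul, Real.norm_eq_abs]
  gcongr
  exact max_le (le_abs_self _) (abs_nonneg _)

lemma integrable_atomicMeasure_neg (h : Summable fun i ↦ ‖w i • f (x i)‖) :
    Integrable f (atomicMeasure (-w) x) :=
  integrable_atomicMeasure (by simpa only [Pi.neg_apply, neg_smul, norm_neg] using h)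

lemma isFiniteMeasure_atomicMeasure (hw : Summable w) (x : ι → α) :
    IsFiniteMeasure (atomicMeasure w x) :=
  (integrable_const_iff_isFiniteMeasure one_ne_zero).1 <|
    integrable_atomicMeasure (f := fun _ ↦ (1 : ℝ)) (by simpa using hw.abs)

lemma hasSum_integral_atomicMeasure_sub_neg [CompleteSpace E]
    (h : Summable fun i ↦ ‖w i • f (x i)‖) :
    HasSum (fun i ↦ w i • f (x i))
      (∫ a, f a ∂atomicMeasure w x - ∫ a, f a ∂atomicMeasure (-w) x) := by
  have hsub := (hasSum_integral_atomicMeasure (integrable_atomicMeasure h)).sub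
    (hasSum_integral_atomicMeasure (integrable_atomicMeasure_neg h))
  simpa only [Pi.neg_apply, ← sub_smul, max_zero_sub_max_neg_zero_eq_self] using hsub

end AtomicMeasure

section MomentBlock

variable {ι : Type*} [Fintype ι] {n : ℕ} {w x : ι → ℝ}

/-- The atoms `x i` with signed weights `w i` form a block in the gliding hump construction: their
moments of order `< n` vanish and are absolutely bounded by `ε`, and the `n`-th moment is `s`. -/
structure IsMomentBlock (n : ℕ) (s ε : ℝ) (w x : ι → ℝ) : Prop where
  moment_of_lt : ∀ k < n, ∑ i, w i * x i ^ k = 0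
  moment_self : ∑ i, w i * x i ^ n = s
  absMoment_le : ∀ k < n, ∑ i, |w i * x i ^ k| ≤ ε

lemma exists_isMomentBlock_of_moment_ne_zero (hlt : ∀ k < n, ∑ i, w i * x i ^ k = 0)
    (hn : ∑ i, w i * x i ^ n ≠ 0) (s : ℝ) {ε : ℝ} (hε : 0 < ε) :
    ∃ w' x' : ι → ℝ, IsMomentBlock n s ε w' x' := by
  set m := ∑ i, w i * x i ^ n
  have small : ∀ᶠ R : ℝ in Filter.atTop, ∀ k ∈ Finset.range n,
      |s / m| * (R ^ k / R ^ n) * ∑ i, |w i * x i ^ k| ≤ ε := by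
    refine (Finset.eventually_all _).2 fun k hk ↦ ?_
    have lim := ((tendsto_pow_div_pow_atTop_zero (𝕜 := ℝ) (Finset.mem_range.1 hk)).const_mul
      |s / m|).mul_const (∑ i, |w i * x i ^ k|)
    rw [mul_zero, zero_mul] at lim
    exact lim.eventually_le_const hε
  obtain ⟨R, hsmall, hR⟩ := (small.and (Filter.eventually_gt_atTop 0)).exists
  have dilate (i : ι) (k : ℕ) : s / m / R ^ n * w i * (R * x i) ^ k =
      s / m * (R ^ k / R ^ n) * (w i * x i ^ k) := by ring
  refine ⟨fun i ↦ s / m / R ^ n * w i, fun i ↦ R * x i, ?_, ?_, fun k hk ↦ ?_⟩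
  · intro k hk
    simp only [dilate, ← Finset.mul_sum, hlt k hk, mul_zero]
  · simp only [dilate, ← Finset.mul_sum]
    rw [div_self (by positivity), mul_one, div_mul_cancel₀ s hn]
  · simp only [dilate, abs_mul (s / m * _), ← Finset.mul_sum]
    rw [abs_mul, abs_of_pos (by positivity : 0 < R ^ k / R ^ n)]
    exact hsmall k (Finset.mem_range.2 hk)

end MomentBlock

lemma sum_neg_one_pow_mul_choose_mul_pow {R : Type*} [CommRing R] {n k : ℕ} (hk : k ≤ n) :
    ∑ j : Fin (n + 1), ((-1) ^ (n - j : ℕ) * n.choose j : R) * (j : R) ^ k =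
      if k = n then (n.factorial : R) else 0 := by
  have h := fwdDiff_iter_eq_sum_shift (1 : R) (fun r ↦ r ^ k) n 0
  rw [Finset.sum_range] at h
  split_ifs with hkn
  · subst hkn
    simpa [fwdDiff_iter_eq_factorial] using h.symm
  · simpa [fwdDiff_iter_pow_eq_zero_of_lt (hk.lt_of_ne hkn)] using h.symm

lemma exists_isMomentBlock (n : ℕ) (s : ℝ) {ε : ℝ} (hε : 0 < ε) :
    ∃ w x : Fin (n + 1) → ℝ, IsMomentBlock n s ε w x := by
  refine exists_isMomentBlock_of_moment_ne_zero
    (w := fun j : Fin (n + 1) ↦ (-1) ^ (n - j : ℕ) * n.choose j) (x := fun j ↦ j)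
    (fun k hk ↦ ?_) ?_ s hε
  · rw [sum_neg_one_pow_mul_choose_mul_pow hk.le, if_neg hk.ne]
  · rw [sum_neg_one_pow_mul_choose_mul_pow le_rfl, if_pos rfl]
    exact mod_cast n.factorial_ne_zero

lemma exists_sum_range_succ_eq_of_diagonal {G : Type*} [AddCommGroup G] {M : ℕ → G → ℕ → G}
    (hM : ∀ n s, M n s n = s) (t : ℕ → G) :
    ∃ s : ℕ → G, ∀ n, ∑ m ∈ Finset.range (n + 1), M m (s m) n = t n := by
  obtain ⟨s, hs⟩ : ∃ s : ℕ → G, ∀ n, s n = t n - ∑ m : Fin n, M m (s m) n :=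
    ⟨wellFounded_lt.fix fun n s ↦ t n - ∑ m : Fin n, M m (s m m.2) n, wellFounded_lt.fix_eq _⟩
  refine ⟨s, fun n ↦ ?_⟩
  rw [Finset.sum_range_succ, hM, hs n, Finset.sum_range, add_sub_cancel]

lemma hasSum_sigma_of_summable_sum_norm {β : Type*} {κ : β → Type*} [∀ b, Fintype (κ b)]
    {E : Type*} [NormedAddCommGroup E] [CompleteSpace E] {f : (Σ b, κ b) → E} {a : E}
    (hf : Summable fun b ↦ ∑ i, ‖f ⟨b, i⟩‖) (ha : HasSum (fun b ↦ ∑ i, f ⟨b, i⟩) a) :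
    HasSum f a := by
  refine ha.sigma_of_hasSum (fun b ↦ hasSum_fintype _) (.of_norm ?_)
  exact (summable_sigma_of_nonneg fun _ ↦ norm_nonneg _).2
    ⟨fun b ↦ (hasSum_fintype _).summable, by simpa only [tsum_fintype] using hf⟩

theorem exists_hasSum_mul_pow (t : ℕ → ℝ) :
    ∃ w x : (Σ n : ℕ, Fin (n + 1)) → ℝ, ∀ k, HasSum (fun i ↦ w i * x i ^ k) (t k) := by
  choose w x hblock using fun n s ↦ exists_isMomentBlock n s (ε := (1 / 2) ^ n) (by positivity)
  obtain ⟨s, hs⟩ := exists_sum_range_succ_eq_of_diagonal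
    (M := fun n s k ↦ ∑ i, w n s i * x n s i ^ k) (fun n s ↦ (hblock n s).moment_self) t
  refine ⟨fun i ↦ w i.1 (s i.1) i.2, fun i ↦ x i.1 (s i.1) i.2, fun k ↦
    hasSum_sigma_of_summable_sum_norm ?_ ?_⟩
  · refine summable_geometric_two.of_norm_bounded_eventually_nat ?_
    filter_upwards [Filter.eventually_gt_atTop k] with n hkn
    rw [Real.norm_of_nonneg (by positivity)]
    exact (hblock n (s n)).absMoment_le k hkn
  · rw [← hs k]
    refine hasSum_sum_of_ne_finset_zero fun n hn ↦ (hblock n (s n)).moment_of_lt k ?_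
    simpa using hn

/-- **Boas; cf. Widder.** Every real sequence is the moment sequence of a
signed Borel measure of bounded variation on `ℝ` all of whose absolute moments are finite:
there is a signed measure `μ` (with Jordan decomposition `μ₁ − μ₂`) such that
`∫ |x|^k d|μ| < ∞` and `∫ x^k dμ₁ − ∫ x^k dμ₂ = t k` for all `k`. -/
theorem every_sequence_is_signed_moment_sequence (t : ℕ → ℝ) :
    ∃ μ : SignedMeasure ℝ,
      (∀ k : ℕ, Integrable (fun x : ℝ => |x| ^ k) μ.totalVariation) ∧
      (∀ k : ℕ,
        (∫ x, x ^ k ∂μ.toJordanDecomposition.posPart) -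
          (∫ x, x ^ k ∂μ.toJordanDecomposition.negPart) = t k) := by
  obtain ⟨w, x, hwx⟩ := exists_hasSum_mul_pow t
  have hw : Summable w := by simpa using (hwx 0).summable
  have := isFiniteMeasure_atomicMeasure hw x
  have := isFiniteMeasure_atomicMeasure hw.neg x
  have hpos (k : ℕ) : Integrable (fun y ↦ y ^ k) (atomicMeasure w x) :=
    integrable_atomicMeasure (hwx k).summable.norm
  have hneg (k : ℕ) : Integrable (fun y ↦ y ^ k) (atomicMeasure (-w) x) :=
    integrable_atomicMeasure_neg (hwx k).summable.norm
  refine ⟨(atomicMeasure w x).toSignedMeasure - (atomicMeasure (-w) x).toSignedMeasure,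
    fun k ↦ ?_, fun k ↦ ?_⟩
  · simpa only [norm_pow, Real.norm_eq_abs] using
      (integrable_totalVariation_toSignedMeasure_sub (hpos k) (hneg k)).norm
  · rw [integral_posPart_sub_integral_negPart_toSignedMeasure_sub (hpos k) (hneg k)]
    exact (hasSum_integral_atomicMeasure_sub_neg (hwx k).summable.norm).unique (hwx k)
end
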